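/- Let C be an m×n real matrix, V an n×k real matrix with orthonormal columns (VᵀV = I_k), P = VVᵀ, and μ ≥ 0 a real number. Define the objective f(X) = ∑_{i,j} (X_{ij} − C_{ij})² + μ·trace(X·P·Xᵀ) over m×n real matrices X, and set X* = C·(I − (μ/(1+μ))·P). Then X* minimizes f: for every m×n real matrix X, f(X*) ≤ f(X). -/

import Mathlib

open Matrix

/-- The Tikhonov-regularized objective
`f(X) = ∑_{i,j} (X_{ij} − C_{ij})² + μ·trace(X·P·Xᵀ)`. -/
noncomputable def tikhonovObjective (m n : ℕ) (C : Matrix (Fin m) (Fin n) ℝ)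
    (P : Matrix (Fin n) (Fin n) ℝ) (μ : ℝ) (X : Matrix (Fin m) (Fin n) ℝ) : ℝ :=
  (∑ i, ∑ j, (X i j - C i j) ^ 2) + μ * Matrix.trace (X * P * Xᵀ)

/-!
With `A = 1 + μ • P`, the objective is the quadratic `tr (X A Xᵀ) - 2 tr (X Cᵀ) + tr (C Cᵀ)`. If
`Y A = C`, completing the square gives `f X = f Y + tr ((X - Y) A (X - Y)ᵀ)`, so `Y` is a minimizer
as soon as `A` is positive semidefinite. For an orthogonal projection `P` and `μ > -1`, the
decomposition `A = (1 - P) + (1 + μ) • P` shows that `A` is positive, with inverse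
`(1 - P) + (1 + μ)⁻¹ • P = 1 - (μ / (1 + μ)) • P`.
-/

section Projection

theorem one_sub_smul_mul_one_add_smul_of_isIdempotentElem {K R : Type*} [Field K] [Ring R]
    [Algebra K R] {p : R} (hp : IsIdempotentElem p) {μ : K} (hμ : 1 + μ ≠ 0) :
    (1 - (μ / (1 + μ)) • p) * (1 + μ • p) = 1 := by
  have coeff_eq_zero : μ - μ / (1 + μ) - μ / (1 + μ) * μ = 0 := by
    field_simp
    ring
  calc (1 - (μ / (1 + μ)) • p) * (1 + μ • p)
      = 1 + (μ - μ / (1 + μ) - μ / (1 + μ) * μ) • p := by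
        simp only [sub_mul, mul_add, one_mul, mul_one, smul_mul_smul_comm, hp.eq]
        module
    _ = 1 := by rw [coeff_eq_zero, zero_smul, add_zero]

theorem one_add_smul_nonneg_of_isStarProjection {K R : Type*} [Ring K] [PartialOrder K]
    [IsOrderedAddMonoid K] [Ring R] [PartialOrder R] [StarRing R] [StarOrderedRing R] [Module K R]
    [PosSMulMono K R] {p : R} (hp : IsStarProjection p) {μ : K} (hμ : -1 ≤ μ) :
    0 ≤ 1 + μ • p := by
  have one_add_nonneg : 0 ≤ 1 + μ := neg_le_iff_add_nonneg'.mp hμ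
  calc 0 ≤ (1 - p) + (1 + μ) • p :=
        add_nonneg hp.one_sub_nonneg (smul_nonneg one_add_nonneg hp.nonneg)
    _ = 1 + μ • p := by rw [add_smul, one_smul, ← add_assoc, sub_add_cancel]

theorem isStarProjection_mul_conjTranspose_of_conjTranspose_mul_eq_one {n k R : Type*} [Fintype n]
    [Fintype k] [DecidableEq k] [Semiring R] [StarRing R] {V : Matrix n k R} (hV : Vᴴ * V = 1) :
    IsStarProjection (V * Vᴴ) where
  isIdempotentElem := by
    rw [IsIdempotentElem, Matrix.mul_assoc, ← Matrix.mul_assoc Vᴴ, hV, Matrix.one_mul]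
  isSelfAdjoint := isHermitian_mul_conjTranspose_self V

end Projection

section Trace

variable {m n R : Type*} [Fintype m] [Fintype n] [CommRing R]

theorem sum_sum_sq_eq_trace_mul_transpose (X : Matrix m n R) :
    ∑ i, ∑ j, X i j ^ 2 = trace (X * Xᵀ) := by
  simp only [← sum_hadamard_eq, hadamard_apply, sq]

theorem trace_sub_mul_mul_transpose_sub {A : Matrix n n R} (hA : A.IsSymm) (X Y : Matrix m n R) :
    trace ((X - Y) * A * (X - Y)ᵀ) =
      trace (X * A * Xᵀ) - 2 * trace (X * A * Yᵀ) + trace (Y * A * Yᵀ) := by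
  have cross_symm : trace (Y * A * Xᵀ) = trace (X * A * Yᵀ) := by
    rw [← trace_transpose, transpose_mul, transpose_mul, transpose_transpose, hA.eq,
      Matrix.mul_assoc]
  simp only [transpose_sub, Matrix.sub_mul, Matrix.mul_sub, trace_sub, cross_symm]
  ring

end Trace

section Objective

variable {m n : ℕ} {C Y : Matrix (Fin m) (Fin n) ℝ} {P : Matrix (Fin n) (Fin n) ℝ} {μ : ℝ}

theorem tikhonovObjective_eq_trace (X : Matrix (Fin m) (Fin n) ℝ) :
    tikhonovObjective m n C P μ X =
      trace (X * (1 + μ • P) * Xᵀ) - 2 * trace (X * Cᵀ) + trace (C * Cᵀ) := by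
  have fidelity : ∑ i, ∑ j, (X i j - C i j) ^ 2 =
      trace (X * Xᵀ) - 2 * trace (X * Cᵀ) + trace (C * Cᵀ) := by
    simpa only [Matrix.mul_one, ← sum_sum_sq_eq_trace_mul_transpose, Matrix.sub_apply] using
      trace_sub_mul_mul_transpose_sub isSymm_one X C
  have regularized : trace (X * (1 + μ • P) * Xᵀ) = trace (X * Xᵀ) + μ * trace (X * P * Xᵀ) := by
    simp only [Matrix.mul_add, Matrix.mul_one, Matrix.mul_smul, Matrix.add_mul, Matrix.smul_mul,
      trace_add, trace_smul, smul_eq_mul]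
  rw [tikhonovObjective, fidelity, regularized]
  ring

theorem tikhonovObjective_eq_add_trace (hA : (1 + μ • P).IsSymm) (hY : Y * (1 + μ • P) = C)
    (X : Matrix (Fin m) (Fin n) ℝ) :
    tikhonovObjective m n C P μ X =
      tikhonovObjective m n C P μ Y + trace ((X - Y) * (1 + μ • P) * (X - Y)ᵀ) := by
  have linear_term (Z : Matrix (Fin m) (Fin n) ℝ) :
      trace (Z * Cᵀ) = trace (Z * (1 + μ • P) * Yᵀ) := by
    rw [← hY, transpose_mul, hA.eq, Matrix.mul_assoc]
  rw [tikhonovObjective_eq_trace X, tikhonovObjective_eq_trace Y,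
    trace_sub_mul_mul_transpose_sub hA, linear_term X, linear_term Y]
  ring

theorem tikhonovObjective_le_of_posSemidef (hA : (1 + μ • P).PosSemidef)
    (hY : Y * (1 + μ • P) = C) (X : Matrix (Fin m) (Fin n) ℝ) :
    tikhonovObjective m n C P μ Y ≤ tikhonovObjective m n C P μ X := by
  have symm : (1 + μ • P).IsSymm := isHermitian_iff_isSymm.mp hA.isHermitian
  have gap_nonneg : 0 ≤ trace ((X - Y) * (1 + μ • P) * (X - Y)ᵀ) := by
    simpa only [conjTranspose_eq_transpose_of_trivial] using
      (hA.mul_mul_conjTranspose_same (X - Y)).trace_nonneg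
  rw [tikhonovObjective_eq_add_trace symm hY X]
  exact le_add_of_nonneg_right gap_nonneg

open scoped MatrixOrder in
theorem soft_projection_minimizes_objective_general (hP : IsStarProjection P) (hμ : -1 < μ)
    (X : Matrix (Fin m) (Fin n) ℝ) :
    tikhonovObjective m n C P μ (C * (1 - (μ / (1 + μ)) • P)) ≤ tikhonovObjective m n C P μ X := by
  have one_add_ne_zero : 1 + μ ≠ 0 := by linarith
  refine tikhonovObjective_le_of_posSemidef
    (one_add_smul_nonneg_of_isStarProjection hP hμ.le).posSemidef ?_ X
  rw [Matrix.mul_assoc, one_sub_smul_mul_one_add_smul_of_isIdempotentElem hP.isIdempotentElem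
    one_add_ne_zero, Matrix.mul_one]

end Objective

theorem soft_projection_minimizes_objective
    (m n k : ℕ) (C : Matrix (Fin m) (Fin n) ℝ) (V : Matrix (Fin n) (Fin k) ℝ)
    (hV : Vᵀ * V = 1) (μ : ℝ) (hμ : 0 ≤ μ) :
    ∀ X : Matrix (Fin m) (Fin n) ℝ,
      tikhonovObjective m n C (V * Vᵀ) μ (C * (1 - (μ / (1 + μ)) • (V * Vᵀ))) ≤
        tikhonovObjective m n C (V * Vᵀ) μ X :=
  soft_projection_minimizes_objective_general
    (isStarProjection_mul_conjTranspose_of_conjTranspose_mul_eq_one hV) (by linarith)
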